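/- Let T be a set of n-qubit Pauli operators, let τ be a determining tree over T with root R, and let F be an n-qubit Pauli operator that commutes with every operator in T and that occurs as a node label in τ. Then there exists a determining tree over T with root R, having the same multiset of leaf labels as τ, in which the label F occurs only on children of the root. -/

import Mathlib

/-!
Since `F` commutes with `T`, it commutes with every node label, because these are products of
elements of `T`; moreover `F * F = 1`. Subtrees labeled `F` are lifted towards the root, working
from the leaves upwards. Concretely, each valid tree `t` is replaced by a forest (`exists_forest`)
with the same leaves and the same product of root labels, in which `F` occurs only at roots, and
whose root labels all belong to `{F, t.label, t.label * F}`.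

At an internal node labeled `M`, concatenate the forests of its children. The labels still commute
pairwise and multiply to `M`. Separate the trees labeled `F`, say `k` of them, from the others, and
hang the others below a new node. Its label is `M * F ^ k`, which is `M` or `M * F`, and this is
again a Pauli operator because a product of two commuting Pauli operators is one
(`IsPauli.mul_of_commute`). This new node and the `k` trees labeled `F` form the forest of the
original node. If the new node itself happens to be labeled `F`, it simply becomes one more tree of
the forest with root `F`, and is lifted at the next step.

At the root of `τ` the concatenated forest of the children is attached to the root directly, so `F`
occurs nowhere below the children of the root.
-/

open Matrix

/-- Index type for `n` qubits: `Fin n → Fin 2` has cardinality `2^n`. -/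
abbrev QubitIdx (n : ℕ) := Fin n → Fin 2

/-- `2^n × 2^n` complex matrices. -/
abbrev Mat (n : ℕ) := Matrix (QubitIdx n) (QubitIdx n) ℂ

/-- The four single-qubit Pauli matrices `I, X, Y, Z`. -/
noncomputable def pauliMat : Fin 4 → Matrix (Fin 2) (Fin 2) ℂ :=
  ![1, !![0, 1; 1, 0], !![0, -Complex.I; Complex.I, 0], !![1, 0; 0, -1]]

/-- The tensor product `P₁ ⊗ ⋯ ⊗ Pₙ` of single-qubit Pauli matrices. -/
noncomputable def pauliTensor (n : ℕ) (f : Fin n → Fin 4) : Mat n :=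
  fun i k => ∏ j, pauliMat (f j) (i j) (k j)

/-- An `n`-qubit Pauli operator: `ε • P₁ ⊗ ⋯ ⊗ Pₙ` with `ε ∈ {1, -1}`. -/
def IsPauli (n : ℕ) (M : Mat n) : Prop :=
  ∃ (ε : ℂ) (f : Fin n → Fin 4), (ε = 1 ∨ ε = -1) ∧ M = ε • pauliTensor n f

/-- Two operators anticommute. -/
def PAntiCommute {n : ℕ} (A B : Mat n) : Prop := A * B = -(B * A)

/-- Finite rooted trees whose nodes are labeled by `2^n × 2^n` matrices.
A `leaf` has no children; a `node` has a (finite) list of children. -/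
inductive PTree (n : ℕ) : Type
  | leaf : Mat n → PTree n
  | node : Mat n → List (PTree n) → PTree n

namespace PTree

variable {n : ℕ}

/-- The label of the root of the tree. -/
def label : PTree n → Mat n
  | leaf M => M
  | node M _ => M

mutual
/-- The multiset of leaf labels of the tree. -/
def leaves : PTree n → Multiset (Mat n)
  | .leaf M => {M}
  | .node _ cs => leavesList cs
/-- The multiset of leaf labels of a list of trees. -/
def leavesList : List (PTree n) → Multiset (Mat n)
  | [] => 0
  | c :: cs => c.leaves + leavesList cs
end

mutual
/-- The list of leaf labels of the tree in depth-first (left-to-right) order. -/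
def leafList : PTree n → List (Mat n)
  | .leaf M => [M]
  | .node _ cs => leafListList cs
/-- The list of leaf labels of a list of trees, in depth-first order. -/
def leafListList : List (PTree n) → List (Mat n)
  | [] => []
  | c :: cs => c.leafList ++ leafListList cs
end

mutual
/-- The multiset of all node labels of the tree. -/
def nodeLabels : PTree n → Multiset (Mat n)
  | .leaf M => {M}
  | .node M cs => M ::ₘ nodeLabelsList cs
/-- The multiset of all node labels of a list of trees. -/
def nodeLabelsList : List (PTree n) → Multiset (Mat n)
  | [] => 0
  | c :: cs => c.nodeLabels + nodeLabelsList cs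
end

/-- The multiset of labels of all nodes at depth ≥ 2, i.e. strictly below
the children of the root. -/
def deepLabels : PTree n → Multiset (Mat n)
  | .leaf _ => 0
  | .node _ cs => (cs.map fun c =>
      match c with
      | .leaf _ => (0 : Multiset (Mat n))
      | .node _ cs' => nodeLabelsList cs').sum

/-- A valid determining tree over a set `S`: every leaf is labeled by an
element of `S`, every node is labeled by a Pauli operator, and for every
internal node, the labels of its children pairwise commute and the label of
the node is the matrix product of the labels of its children. -/
inductive Valid (S : Set (Mat n)) : PTree n → Prop
  | leaf {M : Mat n} : M ∈ S → Valid S (PTree.leaf M)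
  | node {M : Mat n} {cs : List (PTree n)} :
      IsPauli n M →
      M = (cs.map label).prod →
      cs.Pairwise (fun a b => Commute a.label b.label) →
      (∀ c ∈ cs, Valid S c) →
      Valid S (PTree.node M cs)

/-- Every internal node of the tree has at most two children. -/
inductive Binary : PTree n → Prop
  | leaf (M : Mat n) : Binary (PTree.leaf M)
  | node (M : Mat n) (cs : List (PTree n)) :
      cs.length ≤ 2 → (∀ c ∈ cs, Binary c) → Binary (PTree.node M cs)

open scoped Classical in
/-- The determining set of a tree: the set of operators occurring with odd
total multiplicity among its leaves. -/
noncomputable def detSet (τ : PTree n) : Set (Mat n) :=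
  {M | Odd (τ.leaves.count M)}

end PTree

/-- `τ` is a determining tree for `A` over `S`. -/
def IsDetTree {n : ℕ} (S : Set (Mat n)) (A : Mat n) (τ : PTree n) : Prop :=
  PTree.Valid S τ ∧ τ.label = A

/-- A set `S` of Pauli operators is contextual if for some Pauli operator `A`
there are determining trees for `A` and for `-A` over `S` with identical
determining sets. -/
def Contextual (n : ℕ) (S : Set (Mat n)) : Prop :=
  ∃ (A : Mat n) (τ τ' : PTree n), IsPauli n A ∧
    IsDetTree S A τ ∧ IsDetTree S (-A) τ' ∧ τ.detSet = τ'.detSet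

/-! ### Products of Pauli operators -/

lemma pauliMat_mul_self (a : Fin 4) : pauliMat a * pauliMat a = 1 := by
  fin_cases a <;> ext i j <;> fin_cases i <;> fin_cases j <;>
    simp [pauliMat, Matrix.mul_apply]

lemma exists_pauliMat_mul (a b : Fin 4) :
    ∃ (c : ℂ) (d : Fin 4), pauliMat a * pauliMat b = c • pauliMat d := by
  -- Modulo phases, the index of the product is the bitwise exclusive or of the two indices.
  have key : ∀ (c : ℂ) (d : Fin 4), (∀ i j, (pauliMat a * pauliMat b) i j = c * pauliMat d i j) →
      ∃ (c : ℂ) (d : Fin 4), pauliMat a * pauliMat b = c • pauliMat d := by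
    intro c d h
    exact ⟨c, d, by ext i j; simpa using h i j⟩
  fin_cases a <;> fin_cases b
  · exact key 1 0 (by simp [pauliMat])
  · exact key 1 1 (by simp [pauliMat])
  · exact key 1 2 (by simp [pauliMat])
  · exact key 1 3 (by simp [pauliMat])
  · exact key 1 1 (by simp [pauliMat])
  · exact key 1 0 (by simp [pauliMat, Matrix.one_apply])
  · exact key Complex.I 3 (by simp [pauliMat])
  · exact key (-Complex.I) 2 (by simp [pauliMat])
  · exact key 1 2 (by simp [pauliMat])
  · exact key (-Complex.I) 3 (by simp [pauliMat])
  · exact key 1 0 (by simp [pauliMat, Matrix.one_apply])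
  · exact key Complex.I 1 (by simp [pauliMat])
  · exact key 1 3 (by simp [pauliMat])
  · exact key Complex.I 2 (by simp [pauliMat])
  · exact key (-Complex.I) 1 (by simp [pauliMat])
  · exact key 1 0 (by simp [pauliMat, Matrix.one_apply])

/-- Tensor products multiply factor by factor. -/
lemma pauliTensor_mul_apply {n : ℕ} (f g : Fin n → Fin 4) (i k : QubitIdx n) :
    (pauliTensor n f * pauliTensor n g) i k
      = ∏ j, (pauliMat (f j) * pauliMat (g j)) (i j) (k j) := by
  simp only [Matrix.mul_apply, pauliTensor, ← Finset.prod_mul_distrib]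
  rw [Finset.prod_univ_sum]
  simp

lemma pauliTensor_mul_self {n : ℕ} (f : Fin n → Fin 4) :
    pauliTensor n f * pauliTensor n f = 1 := by
  ext i k
  simp only [pauliTensor_mul_apply, pauliMat_mul_self, Matrix.one_apply]
  rw [Fintype.prod_ite_zero]
  simp [funext_iff]

lemma exists_pauliTensor_mul {n : ℕ} (f g : Fin n → Fin 4) :
    ∃ (c : ℂ) (h : Fin n → Fin 4), pauliTensor n f * pauliTensor n g = c • pauliTensor n h := by
  choose c d hcd using exists_pauliMat_mul
  refine ⟨∏ j, c (f j) (g j), fun j => d (f j) (g j), ?_⟩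
  ext i k
  simp [pauliTensor_mul_apply, hcd, pauliTensor, Finset.prod_mul_distrib]

lemma IsPauli.mul_self {n : ℕ} {A : Mat n} (hA : IsPauli n A) : A * A = 1 := by
  obtain ⟨ε, f, hε, rfl⟩ := hA
  rcases hε with rfl | rfl <;> simp [pauliTensor_mul_self]

/-- Commutativity rules out an imaginary phase: the product is `c • P` for some tensor product `P`
of Pauli matrices, and its square is both `1` and `c ^ 2 • 1`. -/
lemma IsPauli.mul_of_commute {n : ℕ} {A B : Mat n} (hA : IsPauli n A) (hB : IsPauli n B)
    (h : Commute A B) : IsPauli n (A * B) := by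
  have hsq : (A * B) * (A * B) = 1 := by
    rw [h.symm.mul_mul_mul_comm, hA.mul_self, hB.mul_self, one_mul]
  obtain ⟨ε, f, -, rfl⟩ := hA
  obtain ⟨δ, g, -, rfl⟩ := hB
  obtain ⟨c, d, hcd⟩ := exists_pauliTensor_mul f g
  have hAB : (ε • pauliTensor n f) * (δ • pauliTensor n g) = (ε * δ * c) • pauliTensor n d := by
    rw [smul_mul_smul_comm, hcd, smul_smul]
  rw [hAB, smul_mul_smul_comm, pauliTensor_mul_self] at hsq
  refine ⟨ε * δ * c, d, ?_, hAB⟩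
  have := congrFun (congrFun hsq 0) 0
  simp only [Matrix.smul_apply, Matrix.one_apply_eq, smul_eq_mul, mul_one] at this
  exact mul_self_eq_one_iff.mp this

namespace PTree

/-! ### Labels in determining trees -/

/-- The multiset of labels of all nodes strictly below the root. -/
def belowLabels {n : ℕ} : PTree n → Multiset (Mat n)
  | .leaf _ => 0
  | .node _ cs => nodeLabelsList cs

lemma deepLabels_node {n : ℕ} (M : Mat n) (cs : List (PTree n)) :
    (node M cs).deepLabels = (cs.map belowLabels).sum := by
  rw [deepLabels]
  congr 2

lemma nodeLabels_eq {n : ℕ} (t : PTree n) : t.nodeLabels = t.label ::ₘ t.belowLabels := by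
  cases t <;> simp [nodeLabels, belowLabels, label]

lemma leavesList_eq {n : ℕ} (cs : List (PTree n)) : leavesList cs = (cs.map leaves).sum := by
  induction cs with
  | nil => simp [leavesList]
  | cons c cs ih => simp [leavesList, ih]

lemma mem_nodeLabelsList {n : ℕ} {F : Mat n} {cs : List (PTree n)} :
    F ∈ nodeLabelsList cs ↔ ∃ c ∈ cs, F ∈ c.nodeLabels := by
  induction cs with
  | nil => simp [nodeLabelsList]
  | cons c cs ih => simp [nodeLabelsList, ih]

lemma mem_sum_belowLabels {n : ℕ} {F : Mat n} {cs : List (PTree n)} :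
    F ∈ (cs.map belowLabels).sum ↔ ∃ c ∈ cs, F ∈ c.belowLabels := by
  induction cs with
  | nil => simp
  | cons c cs ih => simp [ih]

lemma Valid.commute {n : ℕ} {T : Set (Mat n)} {F : Mat n} (hF : ∀ M ∈ T, Commute F M)
    {t : PTree n} (ht : Valid T t) : Commute F t.label := by
  induction ht with
  | leaf h => exact hF _ h
  | node _ hM _ _ ih =>
    simp only [label]
    rw [hM]
    refine Commute.list_prod_right _ _ ?_
    simpa using ih

/-! ### Lifting the subtrees labeled `F` -/

/-- `IsForest T F A l L`: the list `L` consists of valid trees in which `F` occurs only at the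
roots, the root labels lie in `{F, A, A * F}` and multiply to `A`, and the leaves are `l`. -/
structure IsForest {n : ℕ} (T : Set (Mat n)) (F A : Mat n) (l : Multiset (Mat n))
    (L : List (PTree n)) : Prop where
  valid : ∀ c ∈ L, Valid T c
  below : ∀ c ∈ L, F ∉ c.belowLabels
  label_eq : ∀ c ∈ L, c.label = F ∨ c.label = A ∨ c.label = A * F
  leaves_eq : leavesList L = l
  prod_eq : (L.map label).prod = A

/-- Concatenation of the forests of pairwise commuting siblings. -/
lemma exists_concat {n : ℕ} {T : Set (Mat n)} {F : Mat n} (hF : ∀ M ∈ T, Commute F M)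
    (cs : List (PTree n)) (hv : ∀ c ∈ cs, Valid T c)
    (hp : cs.Pairwise (fun a b => Commute a.label b.label))
    (hL : ∀ c ∈ cs, ∃ L, IsForest T F c.label c.leaves L) :
    ∃ L : List (PTree n), (∀ c ∈ L, Valid T c) ∧ (∀ c ∈ L, F ∉ c.belowLabels) ∧
      (∀ d ∈ L, d.label = F ∨ ∃ c ∈ cs, d.label = c.label ∨ d.label = c.label * F) ∧
      leavesList L = leavesList cs ∧ (L.map label).prod = (cs.map label).prod ∧
      L.Pairwise (fun a b => Commute a.label b.label) := by
  induction cs with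
  | nil => exact ⟨[], by simp⟩
  | cons a cs ih =>
    rw [List.pairwise_cons] at hp
    simp only [List.forall_mem_cons] at hv hL
    obtain ⟨L, h1, h2, h3, h4, h5, h6⟩ := ih hv.2 hp.2 hL.2
    obtain ⟨K, hK⟩ := hL.1
    have hFa : Commute F a.label := hv.1.commute hF
    -- Whatever commutes with `F` and `a.label` commutes with all root labels of the forest `K`.
    have hcomm : ∀ X : Mat n, Commute X F → Commute X a.label →
        ∀ c ∈ K, Commute c.label X := by
      intro X hXF hXa c hc
      rcases hK.label_eq c hc with h | h | h <;> rw [h]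
      · exact hXF.symm
      · exact hXa.symm
      · exact (hXa.mul_right hXF).symm
    refine ⟨K ++ L, ?_, ?_, ?_, ?_, ?_, ?_⟩
    · intro c hc
      rcases List.mem_append.mp hc with h | h
      exacts [hK.valid c h, h1 c h]
    · intro c hc
      rcases List.mem_append.mp hc with h | h
      exacts [hK.below c h, h2 c h]
    · intro d hd
      rcases List.mem_append.mp hd with h | h
      · rcases hK.label_eq d h with h | h
        · exact Or.inl h
        · exact Or.inr ⟨a, by simp, h⟩
      · rcases h3 d h with h | ⟨c, hc, h⟩
        · exact Or.inl h
        · exact Or.inr ⟨c, by simp [hc], h⟩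
    · have := hK.leaves_eq
      simp only [leavesList_eq, List.map_append, List.sum_append, List.map_cons,
        List.sum_cons] at *
      rw [this, h4]
    · simp [hK.prod_eq, h5]
    · rw [List.pairwise_append]
      refine ⟨?_, h6, ?_⟩
      · refine List.Pairwise.imp_of_mem (R := fun _ _ => True) ?_ (List.pairwise_of_forall (by simp))
        intro x y hx hy _
        refine hcomm _ ((hK.valid y hy).commute hF).symm ?_ x hx
        exact hcomm _ hFa.symm (Commute.refl _) y hy
      · intro x hx y hy
        refine hcomm _ ((h1 y hy).commute hF).symm ?_ x hx
        rcases h3 y hy with h | ⟨c, hc, h | h⟩ <;> rw [h]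
        · exact hFa
        · exact (hp.1 c hc).symm
        · exact (hp.1 c hc).symm.mul_left hFa

open scoped Classical in
/-- The lifting step: every valid tree can be replaced by a forest in which `F` occurs only at
roots. -/
lemma exists_forest {n : ℕ} {T : Set (Mat n)} {F : Mat n} (hPF : IsPauli n F)
    (hF : ∀ M ∈ T, Commute F M) {t : PTree n} (ht : Valid T t) :
    ∃ L, IsForest T F t.label t.leaves L := by
  induction ht with
  | @leaf M hM =>
    refine ⟨[leaf M], ?_, ?_, ?_, ?_, ?_⟩
    · simpa using Valid.leaf hM
    · simp [belowLabels]
    · simp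
    · simp [leavesList]
    · simp
  | @node M cs hPM hM hp hv ih =>
    have hFM : Commute F M := (Valid.node hPM hM hp hv).commute hF
    obtain ⟨L, h1, h2, -, h4, h5, h6⟩ := exists_concat hF cs hv hp ih
    set K := L.filter (fun c => decide (c.label ≠ F)) with hKdef
    set E := L.filter (fun c => !decide (c.label ≠ F)) with hEdef
    have hperm : (K ++ E).Perm L := List.filter_append_perm _ L
    have hKL : ∀ c ∈ K, c ∈ L := fun c hc => (List.mem_filter.mp hc).1
    have hEL : ∀ c ∈ E, c ∈ L := fun c hc => (List.mem_filter.mp hc).1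
    have hKF : ∀ c ∈ K, c.label ≠ F := fun c hc => by simpa using (List.mem_filter.mp hc).2
    have hEF : ∀ c ∈ E, c.label = F := fun c hc => by simpa using (List.mem_filter.mp hc).2
    have hprod : (K.map label).prod * (E.map label).prod = M := by
      rw [hM, ← h5, ← List.prod_append, ← List.map_append]
      refine ((hperm.map label).symm.prod_eq' ?_).symm
      rwa [List.pairwise_map]
    have hEprod : (E.map label).prod = F ^ E.length := by
      rw [List.eq_replicate_of_mem (l := E.map label) (a := F) (by simpa using hEF)]
      simp
    -- The label of the new node; `F ^ k` depends only on the parity of `k`.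
    have hN : (K.map label).prod = M ∨ (K.map label).prod = M * F := by
      rcases Nat.even_or_odd' E.length with ⟨m, hm | hm⟩
      · left
        rw [← hprod, hEprod, hm, pow_mul, pow_two, hPF.mul_self, one_pow, mul_one]
      · right
        rw [← hprod, hEprod, hm, pow_succ, pow_mul, pow_two, hPF.mul_self, one_pow, one_mul,
          mul_assoc, hPF.mul_self, mul_one]
    have hPN : IsPauli n (K.map label).prod := by
      rcases hN with h | h <;> rw [h]
      · exact hPM
      · exact hPM.mul_of_commute hPF hFM.symm
    refine ⟨node (K.map label).prod K :: E, ?_, ?_, ?_, ?_, ?_⟩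
    · rw [List.forall_mem_cons]
      exact ⟨Valid.node hPN rfl (h6.sublist List.filter_sublist) fun c hc => h1 c (hKL c hc),
        fun c hc => h1 c (hEL c hc)⟩
    · rw [List.forall_mem_cons]
      refine ⟨?_, fun c hc => h2 c (hEL c hc)⟩
      simp only [belowLabels, mem_nodeLabelsList, nodeLabels_eq, Multiset.mem_cons]
      rintro ⟨c, hc, h | h⟩
      exacts [hKF c hc h.symm, h2 c (hKL c hc) h]
    · rw [List.forall_mem_cons]
      exact ⟨Or.inr hN, fun c hc => Or.inl (hEF c hc)⟩
    · simp only [leavesList, leaves]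
      rw [← h4, leavesList_eq, leavesList_eq, leavesList_eq, ← List.sum_append, ← List.map_append]
      exact (hperm.map leaves).sum_eq
    · simpa [label] using hprod

end PTree


/-- Lemma 2.1: If `F` is a Pauli operator commuting with every
operator in `T` and `F` occurs as a node label in a determining tree `τ` over
`T` with root `R`, then there is a determining tree over `T` with root `R`,
the same multiset of leaf labels, in which `F` occurs only on children of the
root (never at depth ≥ 2). -/
theorem universal_commuter_to_children_of_root {n : ℕ} (T : Set (Mat n))
    (hT : ∀ M ∈ T, IsPauli n M) (R F : Mat n) (hF : IsPauli n F)
    (hFcomm : ∀ M ∈ T, Commute F M)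
    (τ : PTree n) (hτ : PTree.Valid T τ) (hroot : τ.label = R)
    (hocc : F ∈ τ.nodeLabels) :
    ∃ τ' : PTree n, PTree.Valid T τ' ∧ τ'.label = R ∧
      τ'.leaves = τ.leaves ∧ F ∉ τ'.deepLabels := by
  cases hτ with
  | @leaf M hM => exact ⟨.leaf M, .leaf hM, hroot, rfl, by simp [PTree.deepLabels]⟩
  | @node M cs hPM hM hp hv =>
    obtain ⟨L, h1, h2, -, h4, h5, h6⟩ := PTree.exists_concat hFcomm cs hv hp
      fun c hc => PTree.exists_forest hF hFcomm (hv c hc)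
    refine ⟨.node M L, .node hPM (hM.trans h5.symm) h6 h1, hroot, h4, ?_⟩
    rw [PTree.deepLabels_node, PTree.mem_sum_belowLabels]
    rintro ⟨c, hc, h⟩
    exact h2 c hc h
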